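/- Let 𝒳 ⊆ L⁰₊ be convex, solid and bounded in probability. Then the following are equivalent: (i) whenever (Xₙ) is an 𝒳-valued sequence converging to 0 in measure, every sequence of forward convex combinations of (Xₙ) also converges to 0 in measure; (ii) there exists a probability measure Q ~ P such that 𝒳 is uniformly Q-integrable. -/

import Mathlib

open MeasureTheory Filter Topology

/-- `L⁰₊`: (representatives of) measurable functions that are nonnegative `P`-a.s. -/
def L0pos {Ω : Type*} [MeasurableSpace Ω] (P : Measure Ω) : Set (Ω → ℝ) :=
  {X | Measurable X ∧ ∀ᵐ ω ∂P, 0 ≤ X ω}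

/-- A set `S ⊆ L⁰₊` is solid if `X ∈ S`, `Y ∈ L⁰₊` and `Y ≤ X` a.e. imply `Y ∈ S`. -/
def Solid {Ω : Type*} [MeasurableSpace Ω] (P : Measure Ω) (S : Set (Ω → ℝ)) : Prop :=
  ∀ X ∈ S, ∀ Y ∈ L0pos P, (∀ᵐ ω ∂P, Y ω ≤ X ω) → Y ∈ S

/-- `𝒳` is uniformly `Q`-integrable:  `sup_{X ∈ 𝒳} E_Q[X 1_{X > n}] → 0`. -/
def UnifInt {Ω : Type*} [MeasurableSpace Ω] (Q : Measure Ω) (𝒳 : Set (Ω → ℝ)) : Prop :=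
  Tendsto (fun n : ℕ => ⨆ X ∈ 𝒳, ∫⁻ ω in {ω | (n : ℝ) < X ω}, ENNReal.ofReal (X ω) ∂Q)
    atTop (𝓝 0)

/-!
Property (i) is uniform: for each `ε` there is a `δ` such that convex combinations of elements of
`𝒳` with truncated mean `∫ (|X| ∧ 1) dP ≤ δ` have truncated mean at most `ε`. If `K` is a convex
family with truncated means at most `ε`, project the constant `1` onto the closure in `L²(P)` of
the minorants of `K`. The residual `q` satisfies `0 ≤ q ≤ 1`, `∫ (1 - q) dP ≤ ε` and
`∫ q Y dP ≤ ε` for all `Y ∈ K`, so on `{q ≥ 1/2}`, a set of almost full measure, `K` is small in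
`L¹`. Applied to the tails `X 1_{X > n}`, which lie in `𝒳` by solidity and are uniformly close to
`0` by boundedness in probability, this makes `𝒳` uniformly integrable outside sets of arbitrarily
small measure, and `Q` is a weighted sum of restrictions of `P`. Conversely, by Vitali's theorem a
null sequence in `𝒳` is null in `L¹(Q)`, and balls of `L¹(Q)` are convex.
-/

open scoped ENNReal NNReal RealInnerProductSpace

section ConvergenceInMeasure

variable {Ω E : Type*} [MeasurableSpace Ω] {μ ν : Measure Ω}

lemma tendstoInMeasure_of_absolutelyContinuous [PseudoEMetricSpace E] [IsFiniteMeasure μ]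
    [IsFiniteMeasure ν] (hνμ : ν ≪ μ) {X : ℕ → Ω → E} {g : Ω → E}
    (hX : ∀ n, AEStronglyMeasurable (X n) μ) (h : TendstoInMeasure μ X atTop g) :
    TendstoInMeasure ν X atTop g := by
  rw [exists_seq_tendstoInMeasure_atTop_iff fun n => (hX n).mono_ac hνμ]
  intro ns hns
  obtain ⟨ms, hms, hae⟩ := (exists_seq_tendstoInMeasure_atTop_iff hX).1 h ns hns
  exact ⟨ms, hms, hνμ.ae_le hae⟩

variable [NormedAddCommGroup E]

/-- The truncated mean `∫ (‖X‖ ∧ 1) dμ`, which for finite `μ` metrizes convergence in measure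
to `0`. It is used to measure how close the elements of a family are to `0`. -/
noncomputable def truncMean (μ : Measure Ω) (X : Ω → E) : ℝ≥0∞ :=
  ∫⁻ ω, min ‖X ω‖ₑ 1 ∂μ

lemma truncMean_le_measure_support (X : Ω → E) : truncMean μ X ≤ μ (Function.support X) := by
  refine (lintegral_mono fun ω => ?_).trans (lintegral_indicator_one_le (Function.support X))
  by_cases hω : X ω = 0 <;> simp [hω]

lemma truncMean_le_add_measure (X : Ω → E) (η : ℝ≥0∞) :
    truncMean μ X ≤ η * μ Set.univ + μ {ω | η ≤ ‖X ω‖ₑ} := by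
  calc truncMean μ X
      ≤ ∫⁻ ω, (η + {ω | η ≤ ‖X ω‖ₑ}.indicator 1 ω) ∂μ := by
        refine lintegral_mono fun ω => ?_
        rcases lt_or_ge ‖X ω‖ₑ η with hω | hω
        · exact (min_le_left _ _).trans (hω.le.trans le_self_add)
        · rw [Set.indicator_of_mem (by exact hω)]
          exact (min_le_right _ _).trans le_add_self
    _ ≤ η * μ Set.univ + μ {ω | η ≤ ‖X ω‖ₑ} := by
        rw [lintegral_add_left measurable_const, lintegral_const]
        gcongr
        exact lintegral_indicator_one_le _

lemma tendstoInMeasure_zero_iff_tendsto_truncMean [IsFiniteMeasure μ]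
    {ι : Type*} {l : Filter ι} {X : ι → Ω → E} (hX : ∀ i, AEStronglyMeasurable (X i) μ) :
    TendstoInMeasure μ X l (fun _ => 0) ↔ Tendsto (fun i => truncMean μ (X i)) l (𝓝 0) := by
  simp only [tendstoInMeasure_iff_enorm, sub_zero]
  refine ⟨fun h => ENNReal.tendsto_nhds_zero.2 fun e he => ?_, fun h η hη hη_top => ?_⟩
  · obtain ⟨η, hη, hηe⟩ : ∃ η : ℝ≥0, 0 < η ∧ η * μ Set.univ < e / 2 :=
      ENNReal.exists_nnreal_pos_mul_lt (measure_ne_top μ _) (ENNReal.half_pos he.ne').ne'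
    filter_upwards [ENNReal.tendsto_nhds_zero.1 (h η (by exact_mod_cast hη) ENNReal.coe_ne_top)
      _ (ENNReal.half_pos he.ne')] with i hi
    calc truncMean μ (X i)
        ≤ η * μ Set.univ + μ {ω | η ≤ ‖X i ω‖ₑ} := truncMean_le_add_measure _ _
      _ ≤ e / 2 + e / 2 := add_le_add hηe.le hi
      _ = e := ENNReal.add_halves e
  · have hmin : min η 1 ≠ 0 := (lt_min hη one_pos).ne'
    have hmin_top : min η 1 ≠ ∞ := ((min_le_left _ _).trans_lt hη_top.lt_top).ne
    have hlim : Tendsto (fun i => truncMean μ (X i) / min η 1) l (𝓝 0) := by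
      simpa using ENNReal.Tendsto.div_const h (Or.inr hmin)
    refine tendsto_of_tendsto_of_tendsto_of_le_of_le tendsto_const_nhds hlim
      (fun _ => zero_le) fun i => ?_
    calc μ {ω | η ≤ ‖X i ω‖ₑ}
        ≤ μ {ω | min η 1 ≤ min ‖X i ω‖ₑ 1} :=
          measure_mono fun ω (hω : η ≤ ‖X i ω‖ₑ) => min_le_min_right 1 hω
      _ ≤ truncMean μ (X i) / min η 1 :=
          meas_ge_le_lintegral_div ((hX i).enorm.min aemeasurable_const) hmin hmin_top

end ConvergenceInMeasure

section ForwardConvexCombinations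

variable {Ω E : Type*} [MeasurableSpace Ω] {μ : Measure Ω} [NormedAddCommGroup E]
  [NormedSpace ℝ E]

/-- Forward convex combinations of sequences in `𝒳` that converge to `0` in measure converge to
`0` in measure as well. -/
def ForwardConvexNull (μ : Measure Ω) (𝒳 : Set (Ω → E)) : Prop :=
  ∀ X : ℕ → Ω → E, (∀ n, X n ∈ 𝒳) → TendstoInMeasure μ X atTop (fun _ => (0 : E)) →
    ∀ Y : ℕ → Ω → E, (∀ n, Y n ∈ convexHull ℝ {g | ∃ k, n ≤ k ∧ g = X k}) →
      TendstoInMeasure μ Y atTop (fun _ => (0 : E))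

lemma convex_setOf_eLpNorm_le {p : ℝ≥0∞} (hp : 1 ≤ p) (c : ℝ≥0∞) :
    Convex ℝ {Z : Ω → E | AEStronglyMeasurable Z μ ∧ eLpNorm Z p μ ≤ c} := by
  intro U hU V hV s t hs ht hst
  refine ⟨(hU.1.const_smul s).add (hV.1.const_smul t), ?_⟩
  calc eLpNorm (s • U + t • V) p μ
      ≤ eLpNorm (s • U) p μ + eLpNorm (t • V) p μ :=
        eLpNorm_add_le (hU.1.const_smul s) (hV.1.const_smul t) hp
    _ = ENNReal.ofReal s * eLpNorm U p μ + ENNReal.ofReal t * eLpNorm V p μ := by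
        rw [eLpNorm_const_smul, eLpNorm_const_smul, Real.enorm_of_nonneg hs,
          Real.enorm_of_nonneg ht]
    _ ≤ ENNReal.ofReal s * c + ENNReal.ofReal t * c := by
        gcongr
        exacts [hU.2, hV.2]
    _ = c := by rw [← add_mul, ← ENNReal.ofReal_add hs ht, hst, ENNReal.ofReal_one, one_mul]

lemma tendsto_eLpNorm_of_mem_convexHull {p : ℝ≥0∞} (hp : 1 ≤ p)
    {X Y : ℕ → Ω → E} (hX : ∀ n, AEStronglyMeasurable (X n) μ)
    (hY : ∀ n, Y n ∈ convexHull ℝ {g | ∃ k, n ≤ k ∧ g = X k})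
    (h : Tendsto (fun n => eLpNorm (X n) p μ) atTop (𝓝 0)) :
    Tendsto (fun n => eLpNorm (Y n) p μ) atTop (𝓝 0) := by
  refine ENNReal.tendsto_nhds_zero.2 fun e he => ?_
  obtain ⟨M, hM⟩ := eventually_atTop.1 (ENNReal.tendsto_nhds_zero.1 h e he)
  filter_upwards [eventually_ge_atTop M] with n hn
  have hsub : {g | ∃ k, n ≤ k ∧ g = X k} ⊆
      {Z : Ω → E | AEStronglyMeasurable Z μ ∧ eLpNorm Z p μ ≤ e} := by
    rintro _ ⟨k, hk, rfl⟩
    exact ⟨hX k, hM k (hn.trans hk)⟩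
  have hYn := convexHull_min hsub (convex_setOf_eLpNorm_le hp e) (hY n)
  exact hYn.2

lemma aestronglyMeasurable_of_mem_convexHull {S : Set (Ω → E)}
    (hS : ∀ X ∈ S, AEStronglyMeasurable X μ) {Y : Ω → E}
    (hY : Y ∈ convexHull ℝ S) : AEStronglyMeasurable Y μ := by
  have hconv : Convex ℝ {Z : Ω → E | AEStronglyMeasurable Z μ} := fun U hU V hV s t _ _ _ =>
    (AEStronglyMeasurable.const_smul hU s).add (AEStronglyMeasurable.const_smul hV t)
  exact convexHull_min hS hconv hY

lemma exists_seq_enumerating_finsets {α : Type*} (t : ℕ → Finset α) (ht : ∀ n, (t n).Nonempty) :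
    ∃ (x : ℕ → α) (b : ℕ → ℕ), Tendsto b atTop atTop ∧ (∀ k, x k ∈ t (b k)) ∧
      ∀ n, ∃ m, ∀ a ∈ t m, ∃ k, n ≤ k ∧ a = x k := by
  have : Infinite (Σ n, t n) := Infinite.of_surjective Sigma.fst fun n =>
    ⟨⟨n, (ht n).choose, (ht n).choose_spec⟩, rfl⟩
  obtain ⟨e⟩ : Nonempty (ℕ ≃ Σ n, t n) := nonempty_equiv_of_countable
  refine ⟨fun k => (e k).2, fun k => (e k).1, ?_, fun k => (e k).2.2, fun n => ?_⟩
  · rw [← Nat.cofinite_eq_atTop]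
    refine Tendsto.comp (Filter.Tendsto.cofinite_of_finite_preimage_singleton fun n => ?_)
      e.injective.tendsto_cofinite
    refine (Set.finite_range fun a : t n => (⟨n, a⟩ : Σ n, t n)).subset ?_
    rintro ⟨_, a⟩ rfl
    exact ⟨a, rfl⟩
  · obtain ⟨m, hm⟩ := Infinite.exists_notMem_finset ((Finset.range n).image fun k => (e k).1)
    refine ⟨m, fun a ha => ?_⟩
    obtain ⟨k, hk⟩ := e.surjective ⟨m, a, ha⟩
    refine ⟨k, ?_, by dsimp only; rw [hk]⟩
    by_contra! hlt
    exact hm (Finset.mem_image.2 ⟨k, Finset.mem_range.2 hlt, by rw [hk]⟩)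

lemma ForwardConvexNull.exists_forall_mem_convexHull_truncMean_le
    [IsFiniteMeasure μ] {𝒳 : Set (Ω → E)} (h : ForwardConvexNull μ 𝒳)
    (h𝒳 : ∀ X ∈ 𝒳, AEStronglyMeasurable X μ) {ε : ℝ≥0∞} (hε : ε ≠ 0) :
    ∃ δ : ℝ≥0∞, δ ≠ 0 ∧ ∀ Y ∈ convexHull ℝ {X ∈ 𝒳 | truncMean μ X ≤ δ}, truncMean μ Y ≤ ε := by
  by_contra! hcon
  have hfin (n : ℕ) : ∃ (Y : Ω → E) (t : Finset (Ω → E)),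
      (t : Set (Ω → E)) ⊆ {X ∈ 𝒳 | truncMean μ X ≤ (n : ℝ≥0∞)⁻¹} ∧
      Y ∈ convexHull ℝ (t : Set (Ω → E)) ∧ ε < truncMean μ Y := by
    obtain ⟨Y, hY, hlt⟩ := hcon (n : ℝ≥0∞)⁻¹ (by simp)
    rw [convexHull_eq_union_convexHull_finite_subsets, Set.mem_iUnion₂] at hY
    obtain ⟨t, ht, hYt⟩ := hY
    exact ⟨Y, t, ht, hYt, hlt⟩
  choose Y t ht hYt hlt using hfin
  -- Concatenating the finite families `t n` gives a single null sequence in `𝒳`.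
  obtain ⟨X, b, hb, hXt, hblock⟩ := exists_seq_enumerating_finsets t fun n =>
    Finset.coe_nonempty.1 (convexHull_nonempty_iff.1 ⟨Y n, hYt n⟩)
  choose m hm using hblock
  have hX𝒳 (k : ℕ) : X k ∈ 𝒳 := (ht _ (hXt k)).1
  have hXlim : Tendsto (fun k => truncMean μ (X k)) atTop (𝓝 0) :=
    tendsto_of_tendsto_of_tendsto_of_le_of_le tendsto_const_nhds
      (ENNReal.tendsto_inv_nat_nhds_zero.comp hb) (fun _ => zero_le) fun k => (ht _ (hXt k)).2
  have hYX (n : ℕ) : Y (m n) ∈ convexHull ℝ {g | ∃ k, n ≤ k ∧ g = X k} :=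
    convexHull_mono (hm n) (hYt (m n))
  have hYlim := h X hX𝒳 ((tendstoInMeasure_zero_iff_tendsto_truncMean
    fun k => h𝒳 _ (hX𝒳 k)).2 hXlim) _ hYX
  rw [tendstoInMeasure_zero_iff_tendsto_truncMean fun n =>
    aestronglyMeasurable_of_mem_convexHull (fun g hg => h𝒳 g (ht _ hg).1) (hYt (m n))] at hYlim
  exact hε (le_zero_iff.1 (ge_of_tendsto' hYlim fun n => (hlt (m n)).le))

end ForwardConvexCombinations

section Projection

variable {Ω : Type*} [MeasurableSpace Ω] {μ : Measure Ω}

lemma ofReal_inner_eq_lintegral {f g : Lp ℝ 2 μ} (hf : 0 ≤ f) (hg : 0 ≤ g) :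
    ENNReal.ofReal ⟪f, g⟫ = ∫⁻ ω, ENNReal.ofReal (f ω * g ω) ∂μ := by
  have hnonneg : 0 ≤ᵐ[μ] fun ω => ⟪f ω, g ω⟫ := by
    filter_upwards [(Lp.coeFn_nonneg f).2 hf, (Lp.coeFn_nonneg g).2 hg] with ω hfω hgω
    exact mul_nonneg hgω hfω
  rw [L2.inner_def, ofReal_integral_eq_lintegral_ofReal (L2.integrable_inner f g) hnonneg]
  simp only [Real.inner_apply]

lemma inner_sub_inf_sub (u g : Lp ℝ 2 μ) : ⟪u - g, g ⊓ u - g⟫ = ‖g ⊓ u - g‖ ^ 2 := by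
  rw [← real_inner_self_eq_norm_sq, L2.inner_def, L2.inner_def]
  refine integral_congr_ae ?_
  filter_upwards [Lp.coeFn_sub u g, Lp.coeFn_sub (g ⊓ u) g, Lp.coeFn_inf g u] with ω h₁ h₂ h₃
  rw [h₁, h₂, Pi.sub_apply, Pi.sub_apply, h₃, Pi.inf_apply]
  rcases le_total (g ω) (u ω) with h | h <;> simp [h]

lemma exists_le_forall_inner_sub_le_zero {C : Set (Lp ℝ 2 μ)} (hne : C.Nonempty)
    (hclosed : IsClosed C) (hconv : Convex ℝ C) {u : Lp ℝ 2 μ} (hinf : ∀ f ∈ C, f ⊓ u ∈ C) :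
    ∃ g ∈ C, g ≤ u ∧ ∀ f ∈ C, ⟪u - g, f - g⟫ ≤ 0 := by
  obtain ⟨g, hg, hmin⟩ := exists_norm_eq_iInf_of_complete_convex hne hclosed.isComplete hconv u
  have hproj := (norm_eq_iInf_iff_real_inner_le_zero hconv hg).1 hmin
  -- Truncating `g` at `u` stays in `C` and strictly decreases the distance to `u` unless `g ≤ u`.
  have hinf_eq : g ⊓ u = g := by
    have h := hproj _ (hinf g hg)
    rw [inner_sub_inf_sub] at h
    exact sub_eq_zero.1 (norm_eq_zero.1 (pow_eq_zero_iff two_ne_zero |>.1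
      (le_antisymm h (sq_nonneg _))))
  exact ⟨g, hg, inf_eq_left.1 hinf_eq, hproj⟩

lemma exists_density_forall_inner_le {S : Set (Lp ℝ 2 μ)} (hne : S.Nonempty)
    (hconv : Convex ℝ S) (hnonneg : ∀ f ∈ S, 0 ≤ f) {u : Lp ℝ 2 μ} (hinf : ∀ f ∈ S, f ⊓ u ∈ S)
    {ε : ℝ} (hε : ∀ f ∈ S, ⟪u, f ⊓ u⟫ ≤ ε) :
    ∃ q : Lp ℝ 2 μ, 0 ≤ q ∧ q ≤ u ∧ ⟪u, u - q⟫ ≤ ε ∧ ∀ f ∈ S, ⟪q, f⟫ ≤ ε := by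
  have hinf_closure (f : Lp ℝ 2 μ) (hf : f ∈ closure S) : f ⊓ u ∈ closure S :=
    map_mem_closure (f := fun f => f ⊓ u) (by fun_prop) hf hinf
  obtain ⟨g, hg, hgu, hproj⟩ := exists_le_forall_inner_sub_le_zero hne.closure isClosed_closure
    hconv.closure hinf_closure
  have hg_nonneg : 0 ≤ g := closure_minimal (t := Set.Ici 0) hnonneg isClosed_Ici hg
  have hug : ⟪u, g⟫ ≤ ε := by
    have hclosed : IsClosed {f : Lp ℝ 2 μ | ⟪u, f ⊓ u⟫ ≤ ε} :=
      isClosed_le (by fun_prop) continuous_const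
    have h : ⟪u, g ⊓ u⟫ ≤ ε := closure_minimal hε hclosed hg
    rwa [inf_eq_left.2 hgu] at h
  refine ⟨u - g, sub_nonneg.2 hgu, sub_le_self u hg_nonneg, by rwa [sub_sub_cancel], fun f hf => ?_⟩
  calc ⟪u - g, f⟫
      ≤ ⟪u - g, g⟫ := by
        have h := hproj f (subset_closure hf)
        rwa [inner_sub_right, sub_nonpos] at h
    _ = ⟪u, g⟫ - ‖g‖ ^ 2 := by rw [inner_sub_left, real_inner_self_eq_norm_sq]
    _ ≤ ε := (sub_le_self _ (sq_nonneg _)).trans hug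

end Projection

section ConvexFamilies

variable {Ω : Type*} [MeasurableSpace Ω] {μ : Measure Ω} {K : Set (Ω → ℝ)}

/-- The nonnegative square-integrable functions dominated a.e. by an element of `K`. They stand
in for `K` in the Hilbert space `L²(μ)`, to which the elements of `K` need not belong. -/
def l2Minorants (μ : Measure Ω) (K : Set (Ω → ℝ)) : Set (Lp ℝ 2 μ) :=
  {f | 0 ≤ f ∧ ∃ Y ∈ K, f ≤ᵐ[μ] Y}

lemma convex_l2Minorants (hK : Convex ℝ K) : Convex ℝ (l2Minorants μ K) := by
  rintro f ⟨hf, Y, hY, hfY⟩ g ⟨hg, Z, hZ, hgZ⟩ s t hs ht hst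
  have hcoe : ⇑(s • f + t • g) =ᵐ[μ] s • ⇑f + t • ⇑g :=
    (Lp.coeFn_add _ _).trans ((Lp.coeFn_smul s f).add (Lp.coeFn_smul t g))
  refine ⟨(Lp.coeFn_nonneg _).1 ?_, s • Y + t • Z, hK hY hZ hs ht hst, ?_⟩
  · filter_upwards [hcoe, (Lp.coeFn_nonneg f).2 hf, (Lp.coeFn_nonneg g).2 hg] with ω h hfω hgω
    rw [h]
    exact add_nonneg (mul_nonneg hs hfω) (mul_nonneg ht hgω)
  · filter_upwards [hcoe, hfY, hgZ] with ω h hfω hgω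
    rw [h]
    exact add_le_add (mul_le_mul_of_nonneg_left hfω hs) (mul_le_mul_of_nonneg_left hgω ht)

lemma inf_mem_l2Minorants {f u : Lp ℝ 2 μ} (hf : f ∈ l2Minorants μ K) (hu : 0 ≤ u) :
    f ⊓ u ∈ l2Minorants μ K := by
  obtain ⟨hf_nonneg, Y, hY, hfY⟩ := hf
  exact ⟨le_inf hf_nonneg hu, Y, hY, ((Lp.coeFn_le _ _).2 inf_le_left).trans hfY⟩

lemma const_one_nonneg [IsFiniteMeasure μ] : 0 ≤ Lp.const 2 μ (1 : ℝ) := by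
  rw [← Lp.coeFn_nonneg]
  filter_upwards [Lp.coeFn_const 2 μ (1 : ℝ)] with ω hω
  rw [hω]
  exact zero_le_one (α := ℝ)

lemma inner_const_one_inf_le [IsFiniteMeasure μ] {ε : ℝ≥0}
    (hε : ∀ Y ∈ K, truncMean μ Y ≤ ε) {f : Lp ℝ 2 μ} (hf : f ∈ l2Minorants μ K) :
    ⟪Lp.const 2 μ (1 : ℝ), f ⊓ Lp.const 2 μ (1 : ℝ)⟫ ≤ ε := by
  obtain ⟨hf_nonneg, Y, hY, hfY⟩ := hf
  rw [← ENNReal.ofReal_le_ofReal_iff ε.coe_nonneg, ENNReal.ofReal_coe_nnreal,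
    ofReal_inner_eq_lintegral const_one_nonneg (le_inf hf_nonneg const_one_nonneg)]
  refine (lintegral_mono_ae ?_).trans (hε Y hY)
  filter_upwards [Lp.coeFn_const 2 μ (1 : ℝ), Lp.coeFn_inf f (Lp.const 2 μ (1 : ℝ)),
    (Lp.coeFn_nonneg f).2 hf_nonneg, hfY] with ω hone hinf hfω hfYω
  rw [hinf, Pi.inf_apply, hone, Function.const_apply, one_mul,
    Real.enorm_of_nonneg (hfω.trans hfYω), ← ENNReal.ofReal_one, ← ENNReal.ofReal_min]
  gcongr

lemma lintegral_mul_le_of_memLp {q : Lp ℝ 2 μ} (hq : 0 ≤ q) {ε : ℝ≥0}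
    (hε : ∀ f ∈ l2Minorants μ K, ⟪q, f⟫ ≤ ε) {f Y : Ω → ℝ} (hf : MemLp f 2 μ)
    (hf_nonneg : 0 ≤ᵐ[μ] f) (hY : Y ∈ K) (hfY : f ≤ᵐ[μ] Y) :
    ∫⁻ ω, ENNReal.ofReal (q ω * f ω) ∂μ ≤ ε := by
  have hcoe := hf.coeFn_toLp
  have hnonneg : 0 ≤ hf.toLp := (Lp.coeFn_nonneg _).1 (hf_nonneg.trans_eq hcoe.symm)
  calc ∫⁻ ω, ENNReal.ofReal (q ω * f ω) ∂μ
      = ENNReal.ofReal ⟪q, hf.toLp⟫ := by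
        rw [ofReal_inner_eq_lintegral hq hnonneg]
        refine lintegral_congr_ae ?_
        filter_upwards [hcoe] with ω h
        rw [h]
    _ ≤ ε := by
        rw [← ENNReal.ofReal_coe_nnreal]
        exact ENNReal.ofReal_le_ofReal (hε _ ⟨hnonneg, Y, hY, hcoe.trans_le hfY⟩)

lemma lintegral_mul_le_of_inner_l2Minorants_le [IsFiniteMeasure μ] (hK : K ⊆ L0pos μ)
    {q : Lp ℝ 2 μ} (hq : 0 ≤ q) {ε : ℝ≥0} (hε : ∀ f ∈ l2Minorants μ K, ⟪q, f⟫ ≤ ε)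
    {Y : Ω → ℝ} (hY : Y ∈ K) : ∫⁻ ω, ENNReal.ofReal (q ω * Y ω) ∂μ ≤ ε := by
  obtain ⟨hY_meas, hY_nonneg⟩ := hK hY
  have hmin_nonneg (n : ℕ) : 0 ≤ᵐ[μ] fun ω => min (Y ω) n := by
    filter_upwards [hY_nonneg] with ω hω using le_min hω n.cast_nonneg
  have hmin_memLp (n : ℕ) : MemLp (fun ω => min (Y ω) n) 2 μ := by
    refine .of_bound (hY_meas.min measurable_const).aestronglyMeasurable n ?_
    filter_upwards [hmin_nonneg n] with ω hω
    rw [Real.norm_of_nonneg hω]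
    exact min_le_right _ _
  have hbound (n : ℕ) : ∫⁻ ω, ENNReal.ofReal (q ω * min (Y ω) n) ∂μ ≤ ε :=
    lintegral_mul_le_of_memLp hq hε (hmin_memLp n) (hmin_nonneg n) hY
      (.of_forall fun _ => min_le_left _ _)
  have hlim : Tendsto (fun n : ℕ => ∫⁻ ω, ENNReal.ofReal (q ω * min (Y ω) n) ∂μ) atTop
      (𝓝 (∫⁻ ω, ENNReal.ofReal (q ω * Y ω) ∂μ)) := by
    have hq_meas := (Lp.stronglyMeasurable q).measurable
    refine lintegral_tendsto_of_tendsto_of_monotone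
      (fun n => (hq_meas.mul (hY_meas.min measurable_const)).ennreal_ofReal.aemeasurable) ?_ ?_
    · filter_upwards [(Lp.coeFn_nonneg q).2 hq] with ω hω m n hmn
      exact ENNReal.ofReal_le_ofReal
        (mul_le_mul_of_nonneg_left (min_le_min_left _ (Nat.cast_le.2 hmn)) hω)
    · refine .of_forall fun ω => tendsto_const_nhds.congr' ?_
      filter_upwards [eventually_ge_atTop ⌈Y ω⌉₊] with n hn
      rw [min_eq_left (Nat.ceil_le.1 hn)]
  exact le_of_tendsto' hlim hbound

lemma exists_density_lintegral_mul_le [IsFiniteMeasure μ] (hconv : Convex ℝ K)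
    (hK : K ⊆ L0pos μ) (hne : K.Nonempty) {ε : ℝ≥0} (hε : ∀ Y ∈ K, truncMean μ Y ≤ ε) :
    ∃ q : Ω → ℝ, Measurable q ∧ ∫⁻ ω, ENNReal.ofReal (1 - q ω) ∂μ ≤ ε ∧
      ∀ Y ∈ K, ∫⁻ ω, ENNReal.ofReal (q ω * Y ω) ∂μ ≤ ε := by
  obtain ⟨Z, hZ⟩ := hne
  have hzero : (0 : Lp ℝ 2 μ) ∈ l2Minorants μ K :=
    ⟨le_rfl, Z, hZ, (Lp.coeFn_zero ℝ 2 μ).trans_le (hK hZ).2⟩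
  obtain ⟨q, hq_nonneg, hq_le, hq_near, hq⟩ := exists_density_forall_inner_le ⟨0, hzero⟩
    (convex_l2Minorants hconv) (fun f hf => hf.1)
    (fun f hf => inf_mem_l2Minorants hf const_one_nonneg)
    (fun f hf => inner_const_one_inf_le hε hf)
  refine ⟨q, (Lp.stronglyMeasurable q).measurable, ?_, fun Y hY =>
    lintegral_mul_le_of_inner_l2Minorants_le hK hq_nonneg hq hY⟩
  calc ∫⁻ ω, ENNReal.ofReal (1 - q ω) ∂μ
      = ENNReal.ofReal ⟪Lp.const 2 μ (1 : ℝ), Lp.const 2 μ (1 : ℝ) - q⟫ := by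
        rw [ofReal_inner_eq_lintegral const_one_nonneg (sub_nonneg.2 hq_le)]
        refine lintegral_congr_ae ?_
        filter_upwards [Lp.coeFn_const 2 μ (1 : ℝ), Lp.coeFn_sub (Lp.const 2 μ (1 : ℝ)) q]
          with ω hone hsub
        rw [hsub, Pi.sub_apply, hone, Function.const_apply, one_mul]
    _ ≤ ε := by
        rw [← ENNReal.ofReal_coe_nnreal]
        exact ENNReal.ofReal_le_ofReal hq_near

lemma setLIntegral_ofReal_le_mul_lintegral {B : Set Ω} (hB : MeasurableSet B) {c : ℝ≥0}
    {f g : Ω → ℝ} (h : ∀ᵐ ω ∂μ, ω ∈ B → f ω ≤ c * g ω) :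
    ∫⁻ ω in B, ENNReal.ofReal (f ω) ∂μ ≤ c * ∫⁻ ω, ENNReal.ofReal (g ω) ∂μ := by
  calc ∫⁻ ω in B, ENNReal.ofReal (f ω) ∂μ
      ≤ ∫⁻ ω in B, c * ENNReal.ofReal (g ω) ∂μ := by
        refine setLIntegral_mono_ae' hB ?_
        filter_upwards [h] with ω hω hωB
        rw [← ENNReal.ofReal_coe_nnreal, ← ENNReal.ofReal_mul c.coe_nonneg]
        exact ENNReal.ofReal_le_ofReal (hω hωB)
    _ ≤ c * ∫⁻ ω, ENNReal.ofReal (g ω) ∂μ := by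
        rw [lintegral_const_mul' _ _ ENNReal.coe_ne_top]
        gcongr
        exact Measure.restrict_le_self

lemma exists_measurableSet_setLIntegral_le [IsFiniteMeasure μ] (hconv : Convex ℝ K)
    (hK : K ⊆ L0pos μ) {ε : ℝ≥0} (hε : ∀ Y ∈ K, truncMean μ Y ≤ ε) :
    ∃ B, MeasurableSet B ∧ μ Bᶜ ≤ 2 * ε ∧
      ∀ Y ∈ K, ∫⁻ ω in B, ENNReal.ofReal (Y ω) ∂μ ≤ 2 * ε := by
  rcases K.eq_empty_or_nonempty with rfl | hne
  · exact ⟨Set.univ, .univ, by simp, by simp⟩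
  obtain ⟨q, hq_meas, hq_near, hq⟩ := exists_density_lintegral_mul_le hconv hK hne hε
  have hB : MeasurableSet {ω | 1 / 2 ≤ q ω} := measurableSet_le measurable_const hq_meas
  refine ⟨_, hB, ?_, fun Y hY => ?_⟩
  · calc μ {ω | 1 / 2 ≤ q ω}ᶜ
        = ∫⁻ _ in {ω | 1 / 2 ≤ q ω}ᶜ, ENNReal.ofReal 1 ∂μ := by
          rw [ENNReal.ofReal_one, setLIntegral_one]
      _ ≤ (2 : ℝ≥0) * ∫⁻ ω, ENNReal.ofReal (1 - q ω) ∂μ := by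
          refine setLIntegral_ofReal_le_mul_lintegral hB.compl (.of_forall fun ω hω => ?_)
          rw [NNReal.coe_ofNat]
          linarith [not_le.1 (show ¬1 / 2 ≤ q ω from hω)]
      _ ≤ 2 * ε := mul_le_mul_right hq_near _
  · calc ∫⁻ ω in {ω | 1 / 2 ≤ q ω}, ENNReal.ofReal (Y ω) ∂μ
        ≤ (2 : ℝ≥0) * ∫⁻ ω, ENNReal.ofReal (q ω * Y ω) ∂μ := by
          refine setLIntegral_ofReal_le_mul_lintegral hB ?_
          filter_upwards [(hK hY).2] with ω hYω hω
          rw [NNReal.coe_ofNat]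
          nlinarith [show 1 / 2 ≤ q ω from hω]
      _ ≤ 2 * ε := mul_le_mul_right (hq Y hY) _

end ConvexFamilies

section TailMass

variable {Ω : Type*} [MeasurableSpace Ω] {μ ν : Measure Ω} {𝒳 : Set (Ω → ℝ)}

/-- The quantity `sup_{X ∈ 𝒳} E[X 1_{X > n}]` whose convergence to `0` defines uniform
integrability of `𝒳`. -/
noncomputable def tailMass (μ : Measure Ω) (𝒳 : Set (Ω → ℝ)) (n : ℕ) : ℝ≥0∞ :=
  ⨆ X ∈ 𝒳, ∫⁻ ω in {ω | (n : ℝ) < X ω}, ENNReal.ofReal (X ω) ∂μ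

lemma unifInt_iff_tendsto_tailMass : UnifInt μ 𝒳 ↔ Tendsto (tailMass μ 𝒳) atTop (𝓝 0) := Iff.rfl

lemma tailMass_antitone : Antitone (tailMass μ 𝒳) := fun m n hmn =>
  iSup₂_mono fun X _ => lintegral_mono_set fun ω (hω : (n : ℝ) < X ω) =>
    show (m : ℝ) < X ω from (Nat.cast_le.2 hmn).trans_lt hω

lemma tailMass_mono_measure (h : μ ≤ ν) (n : ℕ) : tailMass μ 𝒳 n ≤ tailMass ν 𝒳 n :=
  iSup₂_mono fun _ _ => lintegral_mono' (Measure.restrict_mono le_rfl h) le_rfl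

lemma tailMass_smul_measure (c : ℝ≥0∞) (n : ℕ) :
    tailMass (c • μ) 𝒳 n = c * tailMass μ 𝒳 n := by
  simp only [tailMass, Measure.restrict_smul, lintegral_smul_measure, smul_eq_mul,
    ENNReal.mul_iSup]

lemma tailMass_sum_le (h𝒳 : ∀ X ∈ 𝒳, Measurable X) {ι : Type*} (ν : ι → Measure Ω) (n : ℕ) :
    tailMass (Measure.sum ν) 𝒳 n ≤ ∑' i, tailMass (ν i) 𝒳 n := by
  refine iSup₂_le fun X hX => ?_
  rw [Measure.restrict_sum _ (measurableSet_lt measurable_const (h𝒳 X hX)),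
    lintegral_sum_measure]
  exact ENNReal.tsum_le_tsum fun i => le_iSup₂_of_le X hX le_rfl

lemma UnifInt.smul_measure (h : UnifInt μ 𝒳) {c : ℝ≥0∞} (hc : c ≠ ∞) : UnifInt (c • μ) 𝒳 := by
  rw [unifInt_iff_tendsto_tailMass, funext (tailMass_smul_measure c)]
  simpa only [mul_zero] using
    ENNReal.Tendsto.const_mul (unifInt_iff_tendsto_tailMass.1 h) (Or.inr hc)

lemma tailMass_zero_le (h𝒳 : ∀ X ∈ 𝒳, Measurable X) (n : ℕ) :
    tailMass μ 𝒳 0 ≤ n * μ Set.univ + tailMass μ 𝒳 n := by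
  refine iSup₂_le fun X hX => ?_
  have hS : MeasurableSet {ω | (n : ℝ) < X ω} := measurableSet_lt measurable_const (h𝒳 X hX)
  calc ∫⁻ ω in {ω | ((0 : ℕ) : ℝ) < X ω}, ENNReal.ofReal (X ω) ∂μ
      ≤ ∫⁻ ω, ENNReal.ofReal (X ω) ∂μ := setLIntegral_le_lintegral _ _
    _ = ∫⁻ ω in {ω | (n : ℝ) < X ω}ᶜ, ENNReal.ofReal (X ω) ∂μ +
          ∫⁻ ω in {ω | (n : ℝ) < X ω}, ENNReal.ofReal (X ω) ∂μ := by
        rw [add_comm, lintegral_add_compl _ hS]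
    _ ≤ n * μ Set.univ + tailMass μ 𝒳 n := by
        refine add_le_add ?_ (le_iSup₂_of_le X hX le_rfl)
        calc ∫⁻ ω in {ω | (n : ℝ) < X ω}ᶜ, ENNReal.ofReal (X ω) ∂μ
            ≤ ∫⁻ _ in {ω | (n : ℝ) < X ω}ᶜ, n ∂μ := by
              refine setLIntegral_mono' hS.compl fun ω hω => ?_
              exact ENNReal.ofReal_le_of_le_toReal (by simpa using hω)
          _ ≤ n * μ Set.univ := by
              rw [setLIntegral_const]
              gcongr
              exact Set.subset_univ _

lemma UnifInt.tailMass_zero_ne_top [IsFiniteMeasure μ] (h𝒳 : ∀ X ∈ 𝒳, Measurable X)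
    (h : UnifInt μ 𝒳) : tailMass μ 𝒳 0 ≠ ∞ := by
  obtain ⟨n, hn⟩ := (ENNReal.tendsto_nhds_zero.1 (unifInt_iff_tendsto_tailMass.1 h) 1
    one_pos).exists
  refine ((tailMass_zero_le h𝒳 n).trans_lt ?_).ne
  exact ENNReal.add_lt_top.2 ⟨ENNReal.mul_lt_top (ENNReal.natCast_lt_top n) (measure_lt_top μ _),
    hn.trans_lt ENNReal.one_lt_top⟩

lemma tendsto_tsum_of_dominated {ι : Type*} {F : ℕ → ι → ℝ≥0∞} {f : ι → ℝ≥0∞}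
    (bound : ι → ℝ≥0∞) (hF : ∀ n i, F n i ≤ bound i) (hbound : ∑' i, bound i ≠ ∞)
    (hlim : ∀ i, Tendsto (fun n => F n i) atTop (𝓝 (f i))) :
    Tendsto (fun n => ∑' i, F n i) atTop (𝓝 (∑' i, f i)) := by
  let _ : MeasurableSpace ι := ⊤
  simp only [← lintegral_count] at hbound ⊢
  exact tendsto_lintegral_of_dominated_convergence bound (fun _ => measurable_from_top)
    (fun n => .of_forall (hF n)) hbound (.of_forall hlim)

lemma exists_pos_weights_unifInt_sum (h𝒳 : ∀ X ∈ 𝒳, Measurable X) {ι : Type*} [Countable ι]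
    (ν : ι → Measure Ω) [∀ i, IsFiniteMeasure (ν i)] (h : ∀ i, UnifInt (ν i) 𝒳) :
    ∃ w : ι → ℝ≥0, (∀ i, 0 < w i) ∧ IsFiniteMeasure (Measure.sum fun i => (w i : ℝ≥0∞) • ν i) ∧
      UnifInt (Measure.sum fun i => (w i : ℝ≥0∞) • ν i) 𝒳 := by
  obtain ⟨w, hw_pos, hw_sum⟩ := ENNReal.exists_pos_tsum_mul_lt_of_countable one_ne_zero
    (fun i => tailMass (ν i) 𝒳 0 + ν i Set.univ)
    fun i => ENNReal.add_ne_top.2 ⟨(h i).tailMass_zero_ne_top h𝒳, measure_ne_top _ _⟩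
  refine ⟨w, hw_pos, ⟨?_⟩, ?_⟩
  · rw [Measure.sum_apply _ .univ]
    refine (ENNReal.tsum_le_tsum fun i => ?_).trans_lt (hw_sum.trans ENNReal.one_lt_top)
    rw [Measure.smul_apply, smul_eq_mul, mul_comm]
    gcongr
    exact le_add_self
  · have hle (n : ℕ) : tailMass (Measure.sum fun i => (w i : ℝ≥0∞) • ν i) 𝒳 n ≤
        ∑' i, w i * tailMass (ν i) 𝒳 n := by
      simpa only [tailMass_smul_measure] using
        tailMass_sum_le h𝒳 (fun i => (w i : ℝ≥0∞) • ν i) n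
    have hlim : Tendsto (fun n => ∑' i, w i * tailMass (ν i) 𝒳 n) atTop
        (𝓝 (∑' _ : ι, 0)) := by
      refine tendsto_tsum_of_dominated _ (fun n i => ?_) (hw_sum.trans ENNReal.one_lt_top).ne
        fun i => ?_
      · rw [mul_comm]
        gcongr
        exact (tailMass_antitone n.zero_le).trans le_self_add
      · simpa only [mul_zero] using
          ENNReal.Tendsto.const_mul (unifInt_iff_tendsto_tailMass.1 (h i))
            (Or.inr ENNReal.coe_ne_top)
    rw [tsum_zero] at hlim
    exact tendsto_of_tendsto_of_tendsto_of_le_of_le tendsto_const_nhds hlim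
      (fun _ => zero_le) hle

lemma exists_unifInt_restrict
    (h : ∀ ε : ℝ≥0, 0 < ε → ∃ B, μ Bᶜ ≤ ε ∧ ∃ n, tailMass (μ.restrict B) 𝒳 n ≤ ε)
    {ε : ℝ≥0∞} (hε : ε ≠ 0) :
    ∃ B, μ Bᶜ ≤ ε ∧ UnifInt (μ.restrict B) 𝒳 := by
  obtain ⟨η, hη_pos, hη_sum⟩ := ENNReal.exists_pos_sum_of_countable hε ℕ
  choose B hB_compl n hn using fun k => h (η k) (hη_pos k)
  refine ⟨⋂ k, B k, ?_, ?_⟩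
  · calc μ (⋂ k, B k)ᶜ
        ≤ ∑' k, μ (B k)ᶜ := by
          rw [Set.compl_iInter]
          exact measure_iUnion_le _
      _ ≤ ∑' k, (η k : ℝ≥0∞) := ENNReal.tsum_le_tsum hB_compl
      _ ≤ ε := hη_sum.le
  · have hη_lim := ENNReal.tendsto_atTop_zero_of_tsum_ne_top hη_sum.ne_top
    refine ENNReal.tendsto_nhds_zero.2 fun e he => ?_
    obtain ⟨k, hk⟩ := (ENNReal.tendsto_nhds_zero.1 hη_lim e he).exists
    filter_upwards [eventually_ge_atTop (n k)] with m hm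
    calc tailMass (μ.restrict (⋂ k, B k)) 𝒳 m
        ≤ tailMass (μ.restrict (B k)) 𝒳 m :=
          tailMass_mono_measure (Measure.restrict_mono (Set.iInter_subset B k) le_rfl) m
      _ ≤ tailMass (μ.restrict (B k)) 𝒳 (n k) := tailMass_antitone hm
      _ ≤ η k := hn k
      _ ≤ e := hk

lemma exists_equivalent_probability_unifInt [IsFiniteMeasure μ] [NeZero μ]
    (h𝒳 : ∀ X ∈ 𝒳, Measurable X)
    (h : ∀ ε : ℝ≥0∞, ε ≠ 0 → ∃ B, μ Bᶜ ≤ ε ∧ UnifInt (μ.restrict B) 𝒳) :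
    ∃ Q : Measure Ω, IsProbabilityMeasure Q ∧ Q ≪ μ ∧ μ ≪ Q ∧ UnifInt Q 𝒳 := by
  choose B hB_compl hB_unifInt using fun m : ℕ => h (m : ℝ≥0∞)⁻¹ (by simp)
  obtain ⟨w, hw_pos, hfin, hunifInt⟩ :=
    exists_pos_weights_unifInt_sum h𝒳 (fun m => μ.restrict (B m)) hB_unifInt
  set R := Measure.sum fun m => (w m : ℝ≥0∞) • μ.restrict (B m)
  have hRμ : R ≪ μ := Measure.absolutelyContinuous_sum_left fun m =>
    Measure.restrict_le_self.absolutelyContinuous.smul_left _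
  have hμR : μ ≪ R := by
    refine Measure.AbsolutelyContinuous.mk fun s hs hRs => le_zero_iff.1 ?_
    refine ge_of_tendsto' ENNReal.tendsto_inv_nat_nhds_zero fun m => ?_
    have hsB : μ (s ∩ B m) = 0 := by
      rw [Measure.sum_apply _ hs, ENNReal.tsum_eq_zero] at hRs
      simpa [(hw_pos m).ne', Measure.restrict_apply hs] using hRs m
    calc μ s
        ≤ μ (s ∩ B m) + μ (s \ B m) := measure_le_inter_add_sdiff μ s (B m)
      _ ≤ 0 + μ (B m)ᶜ := add_le_add hsB.le (measure_mono fun ω hω => hω.2)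
      _ ≤ (m : ℝ≥0∞)⁻¹ := by simpa using hB_compl m
  have : NeZero R := ⟨fun hR => NeZero.ne μ (Measure.absolutelyContinuous_zero_iff.1 (hR ▸ hμR))⟩
  exact ⟨(R Set.univ)⁻¹ • R, inferInstance, hRμ.smul_left _,
    hμR.trans (Measure.absolutelyContinuous_smul (ENNReal.inv_ne_zero.2 (measure_ne_top R _))),
    hunifInt.smul_measure (ENNReal.inv_ne_top.2 (NeZero.ne _))⟩

end TailMass

section Solid

variable {Ω : Type*} [MeasurableSpace Ω] {P : Measure Ω} {𝒳 : Set (Ω → ℝ)}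

lemma convex_L0pos : Convex ℝ (L0pos P) := by
  rintro X ⟨hX_meas, hX_nonneg⟩ Y ⟨hY_meas, hY_nonneg⟩ s t hs ht -
  refine ⟨(hX_meas.const_smul s).add (hY_meas.const_smul t), ?_⟩
  filter_upwards [hX_nonneg, hY_nonneg] with ω hXω hYω
  exact add_nonneg (mul_nonneg hs hXω) (mul_nonneg ht hYω)

lemma Solid.indicator_mem (hsolid : Solid P 𝒳) (h𝒳 : 𝒳 ⊆ L0pos P) {X : Ω → ℝ} (hX : X ∈ 𝒳)
    {S : Set Ω} (hS : MeasurableSet S) : S.indicator X ∈ 𝒳 := by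
  obtain ⟨hX_meas, hX_nonneg⟩ := h𝒳 hX
  refine hsolid X hX _ ⟨hX_meas.indicator hS, ?_⟩ ?_
  · filter_upwards [hX_nonneg] with ω hω
    exact Set.indicator_apply_nonneg fun _ => hω
  · filter_upwards [hX_nonneg] with ω hω
    exact Set.indicator_apply_le' (fun _ => le_rfl) fun _ => hω

lemma ForwardConvexNull.exists_tailMass_restrict_le [IsFiniteMeasure P]
    (h : ForwardConvexNull P 𝒳) (h𝒳 : 𝒳 ⊆ L0pos P) (hsolid : Solid P 𝒳)
    (hbdd : Tendsto (fun n : ℕ => ⨆ X ∈ 𝒳, P {ω | (n : ℝ) < X ω}) atTop (𝓝 0))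
    {ε : ℝ≥0} (hε : 0 < ε) :
    ∃ B, P Bᶜ ≤ ε ∧ ∃ n, tailMass (P.restrict B) 𝒳 n ≤ ε := by
  obtain ⟨δ, hδ, hδ_hull⟩ := h.exists_forall_mem_convexHull_truncMean_le
    (fun X hX => (h𝒳 hX).1.aestronglyMeasurable) (ENNReal.coe_ne_zero.2 (half_pos hε).ne')
  have hhull : convexHull ℝ {X ∈ 𝒳 | truncMean P X ≤ δ} ⊆ L0pos P :=
    convexHull_min (fun X hX => h𝒳 hX.1) convex_L0pos
  obtain ⟨B, -, hB_compl, hB_le⟩ :=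
    exists_measurableSet_setLIntegral_le (convex_convexHull ℝ _) hhull hδ_hull
  have htwo : 2 * ((ε / 2 : ℝ≥0) : ℝ≥0∞) = ε := by
    rw [← ENNReal.coe_ofNat, ← ENNReal.coe_mul, mul_div_cancel₀ _ two_ne_zero]
  rw [htwo] at hB_compl hB_le
  obtain ⟨n, hn⟩ := (ENNReal.tendsto_nhds_zero.1 hbdd δ hδ.bot_lt).exists
  refine ⟨B, hB_compl, n, iSup₂_le fun X hX => ?_⟩
  have hS : MeasurableSet {ω | (n : ℝ) < X ω} := measurableSet_lt measurable_const (h𝒳 hX).1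
  have hsmall : truncMean P ({ω | (n : ℝ) < X ω}.indicator X) ≤ δ :=
    calc truncMean P ({ω | (n : ℝ) < X ω}.indicator X)
        ≤ P {ω | (n : ℝ) < X ω} :=
          (truncMean_le_measure_support _).trans (measure_mono Set.support_indicator_subset)
      _ ≤ ⨆ X ∈ 𝒳, P {ω | (n : ℝ) < X ω} :=
          le_iSup₂ (f := fun X (_ : X ∈ 𝒳) => P {ω | (n : ℝ) < X ω}) X hX
      _ ≤ δ := hn
  calc ∫⁻ ω in {ω | (n : ℝ) < X ω}, ENNReal.ofReal (X ω) ∂P.restrict B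
      = ∫⁻ ω in B, ENNReal.ofReal ({ω | (n : ℝ) < X ω}.indicator X ω) ∂P := by
        rw [← lintegral_indicator hS]
        congr with ω
        exact congrFun (Set.indicator_comp_of_zero ENNReal.ofReal_zero) ω
    _ ≤ ε := hB_le _ (subset_convexHull ℝ _ ⟨hsolid.indicator_mem h𝒳 hX hS, hsmall⟩)

end Solid

section UniformIntegrability

variable {Ω : Type*} [MeasurableSpace Ω] {μ : Measure Ω} {𝒳 : Set (Ω → ℝ)}

lemma UnifInt.unifIntegrable [IsFiniteMeasure μ] (h : UnifInt μ 𝒳) (h𝒳 : 𝒳 ⊆ L0pos μ)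
    {ι : Type*} {X : ι → Ω → ℝ} (hX : ∀ i, X i ∈ 𝒳) : UnifIntegrable X 1 μ := by
  refine unifIntegrable_of le_rfl ENNReal.one_ne_top
    (fun i => (h𝒳 (hX i)).1.aestronglyMeasurable) fun ε hε => ?_
  obtain ⟨n, hn⟩ := (ENNReal.tendsto_nhds_zero.1 (unifInt_iff_tendsto_tailMass.1 h) _
    (ENNReal.ofReal_pos.2 hε)).exists
  refine ⟨n + 1, fun i => ?_⟩
  obtain ⟨hX_meas, hX_nonneg⟩ := h𝒳 (hX i)
  calc eLpNorm ({ω | (n : ℝ≥0) + 1 ≤ ‖X i ω‖₊}.indicator (X i)) 1 μ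
      ≤ ∫⁻ ω in {ω | (n : ℝ) < X i ω}, ENNReal.ofReal (X i ω) ∂μ := by
        rw [eLpNorm_one_eq_lintegral_enorm,
          ← lintegral_indicator (measurableSet_lt measurable_const hX_meas)]
        refine lintegral_mono_ae ?_
        filter_upwards [hX_nonneg] with ω hω
        rw [enorm_indicator_eq_indicator_enorm]
        refine Set.indicator_apply_le fun hmem => ?_
        rw [Real.enorm_of_nonneg hω, Set.indicator_of_mem]
        have hle : (n : ℝ) + 1 ≤ X i ω := by
          simpa only [Real.norm_of_nonneg hω] using show (n : ℝ) + 1 ≤ ‖X i ω‖ from hmem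
        exact (lt_add_one _).trans_le hle
    _ ≤ tailMass μ 𝒳 n := le_iSup₂_of_le (X i) (hX i) le_rfl
    _ ≤ ENNReal.ofReal ε := hn

lemma UnifInt.forwardConvexNull {P Q : Measure Ω} [IsFiniteMeasure P] [IsFiniteMeasure Q]
    (h : UnifInt Q 𝒳) (hQP : Q ≪ P) (hPQ : P ≪ Q) (h𝒳 : 𝒳 ⊆ L0pos P) :
    ForwardConvexNull P 𝒳 := by
  intro X hX hXlim Y hY
  have hX_meas (ρ : Measure Ω) (n : ℕ) : AEStronglyMeasurable (X n) ρ :=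
    (h𝒳 (hX n)).1.aestronglyMeasurable
  have hY_meas (n : ℕ) : AEStronglyMeasurable (Y n) Q := by
    refine aestronglyMeasurable_of_mem_convexHull ?_ (hY n)
    rintro _ ⟨k, -, rfl⟩
    exact hX_meas Q k
  have h𝒳Q : 𝒳 ⊆ L0pos Q := fun Z hZ => ⟨(h𝒳 hZ).1, hQP.ae_le (h𝒳 hZ).2⟩
  have hXnorm : Tendsto (fun n => eLpNorm (X n) 1 Q) atTop (𝓝 0) := by
    simpa only [sub_zero] using tendsto_Lp_finite_of_tendstoInMeasure (g := 0) le_rfl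
      ENNReal.one_ne_top (hX_meas Q) MemLp.zero (h.unifIntegrable h𝒳Q hX)
      (tendstoInMeasure_of_absolutelyContinuous hQP (hX_meas P) hXlim)
  have hYnorm := tendsto_eLpNorm_of_mem_convexHull le_rfl (hX_meas Q) hY hXnorm
  refine tendstoInMeasure_of_absolutelyContinuous hPQ hY_meas ?_
  exact tendstoInMeasure_of_tendsto_eLpNorm (g := 0) one_ne_zero hY_meas
    aestronglyMeasurable_zero (by simpa only [sub_zero] using hYnorm)

end UniformIntegrability

theorem stmt_9_general {Ω : Type*} [MeasurableSpace Ω] (P : Measure Ω) [IsFiniteMeasure P]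
    [NeZero P] (𝒳 : Set (Ω → ℝ)) (h𝒳 : 𝒳 ⊆ L0pos P) (hsolid : Solid P 𝒳)
    (hbdd : Tendsto (fun n : ℕ => ⨆ X ∈ 𝒳, P {ω | (n : ℝ) < X ω}) atTop (𝓝 0)) :
    ForwardConvexNull P 𝒳 ↔
      ∃ Q : Measure Ω, IsProbabilityMeasure Q ∧ Q ≪ P ∧ P ≪ Q ∧ UnifInt Q 𝒳 := by
  refine ⟨fun h => ?_, fun ⟨Q, _, hQP, hPQ, hQ⟩ => hQ.forwardConvexNull hQP hPQ h𝒳⟩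
  refine exists_equivalent_probability_unifInt (fun X hX => (h𝒳 hX).1) fun ε hε => ?_
  exact exists_unifInt_restrict (fun η hη => h.exists_tailMass_restrict_le h𝒳 hsolid hbdd hη) hε

/-- For a convex, solid, bounded-in-probability `𝒳 ⊆ L⁰₊`: forward convex combinations of
null sequences in `𝒳` converge to `0` in measure iff `𝒳` is uniformly `Q`-integrable for
some probability `Q ~ P`. -/
theorem stmt_9 {Ω : Type*} [MeasurableSpace Ω] (P : Measure Ω) [IsProbabilityMeasure P]
    (𝒳 : Set (Ω → ℝ)) (h𝒳 : 𝒳 ⊆ L0pos P) (hconv : Convex ℝ 𝒳) (hsolid : Solid P 𝒳)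
    (hbdd : Tendsto (fun n : ℕ => ⨆ X ∈ 𝒳, P {ω | (n : ℝ) < X ω}) atTop (𝓝 0)) :
    (∀ X : ℕ → Ω → ℝ, (∀ n, X n ∈ 𝒳) →
        TendstoInMeasure P X atTop (fun _ => (0 : ℝ)) →
        ∀ Y : ℕ → Ω → ℝ, (∀ n, Y n ∈ convexHull ℝ {g | ∃ k, n ≤ k ∧ g = X k}) →
          TendstoInMeasure P Y atTop (fun _ => (0 : ℝ))) ↔
    (∃ Q : Measure Ω, IsProbabilityMeasure Q ∧ Q ≪ P ∧ P ≪ Q ∧ UnifInt Q 𝒳) :=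
  stmt_9_general P 𝒳 h𝒳 hsolid hbdd
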